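/- Let n ≥ 0 be an integer and set c = 2n+5. For each pair (e,ℓ) ∈ {(0,0), (0,−1), (1,0), (1,−1), (1,1)}, the finite group G = Q_c^{(e,ℓ)} has a balanced presentation with generator rank 2 and relation rank 2: the group cohomology of G with coefficients in the trivial G-module F₃ = ℤ/3ℤ satisfies dim_{F₃} H¹(G, F₃) = 2 and dim_{F₃} H²(G, F₃) = 2. -/

import Mathlib

/-- The commutator `[g,h] = g⁻¹h⁻¹gh`. -/
def fcomm {G : Type*} [Group G] (g h : G) : G := g⁻¹ * h⁻¹ * g * h

namespace CoverLimitDef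

/-- The generators `a, t, u, y, z` of the cover limit, as words in the free group. -/
def awF : FreeGroup (Fin 5) := FreeGroup.of 0
def twF : FreeGroup (Fin 5) := FreeGroup.of 1
def uwF : FreeGroup (Fin 5) := FreeGroup.of 2
def ywF : FreeGroup (Fin 5) := FreeGroup.of 3
def zwF : FreeGroup (Fin 5) := FreeGroup.of 4

/-- The defining relators of the cover limit `C^(e)`:
`a⁻¹·t·a = u`, `(a⁻¹·u·a)·t·u·y = [u,t]^e`, `a³·[[t,a],t] = z`,
`[[u,t],t] = 1`, `[[u,t],u] = 1`, `y³ = 1`,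
`[a,y] = [t,y] = [u,y] = [z,y] = 1`, `z³ = 1`, `[t,z] = [u,z] = 1`. -/
def Crels (e : ℕ) : Set (FreeGroup (Fin 5)) :=
  {awF⁻¹ * twF * awF * uwF⁻¹,
   (awF⁻¹ * uwF * awF) * twF * uwF * ywF * (fcomm uwF twF ^ e)⁻¹,
   awF ^ 3 * fcomm (fcomm twF awF) twF * zwF⁻¹,
   fcomm (fcomm uwF twF) twF,
   fcomm (fcomm uwF twF) uwF,
   ywF ^ 3,
   fcomm awF ywF, fcomm twF ywF, fcomm uwF ywF, fcomm zwF ywF,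
   zwF ^ 3,
   fcomm twF zwF, fcomm uwF zwF}

/-- The cover limit group `C^(e)`. -/
abbrev CoverLimit (e : ℕ) : Type := PresentedGroup (Crels e)

/-- The images of the generators in `C^(e)`. -/
def aC (e : ℕ) : CoverLimit e := PresentedGroup.of 0
def tC (e : ℕ) : CoverLimit e := PresentedGroup.of 1
def uC (e : ℕ) : CoverLimit e := PresentedGroup.of 2
def yC (e : ℕ) : CoverLimit e := PresentedGroup.of 3
def zC (e : ℕ) : CoverLimit e := PresentedGroup.of 4

/-- The left-normed iterated commutator `[t,a,…,a]` with `k` copies of `a`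
(so `wC e (c−1)` is the element `w_c`). -/
def wC (e : ℕ) : ℕ → CoverLimit e
  | 0 => tC e
  | k + 1 => fcomm (wC e k) (aC e)

/-- The element `v_c = [w_{c−2}, [t,a]]` (note `w_{c−2} = wC e (c−3)`). -/
def vC (e c : ℕ) : CoverLimit e := fcomm (wC e (c - 3)) (fcomm (tC e) (aC e))

/-- The class-`c` quotient `Q_c^{(e,ℓ)}` of the cover limit `C^{(e)}`:
the quotient by the normal closure of `y·w_c^ℓ·v_c` and `z·w_c`. -/
abbrev Qgrp (c e : ℕ) (ℓ : ℤ) : Type :=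
  CoverLimit e ⧸ Subgroup.normalClosure
    {yC e * wC e (c - 1) ^ ℓ * vC e c, zC e * wC e (c - 1)}

end CoverLimitDef

open CoverLimitDef

/-- `k` is central modulo the subgroup `A`. -/
def CentralMod {E : Type*} [Group E] (A : Subgroup E) (k : E) : Prop := ∀ g, fcomm k g ∈ A

/-- The left-normed commutator `[t,a,…,a]` with `k` copies of `a`. -/
def itComm {E : Type*} [Group E] (a t : E) : ℕ → E
  | 0 => t
  | k + 1 => fcomm (itComm a t k) a

section Commutators

variable {E F : Type*} [Group E] [Group F]

theorem map_fcomm (φ : E →* F) (g h : E) : φ (fcomm g h) = fcomm (φ g) (φ h) := by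
  simp [fcomm]

theorem map_itComm (φ : E →* F) (a t : E) (k : ℕ) :
    φ (itComm a t k) = itComm (φ a) (φ t) k := by
  induction k with
  | zero => rfl
  | succ k ih => simp [itComm, map_fcomm, ih]

theorem fcomm_eq_one_iff {g h : E} : fcomm g h = 1 ↔ Commute g h := by
  rw [fcomm, mul_assoc, ← mul_inv_rev, inv_mul_eq_one, eq_comm]
  rfl

theorem commute_itComm {g a t : E} (ha : Commute g a) (ht : Commute g t) (k : ℕ) :
    Commute g (itComm a t k) := by
  induction k with
  | zero => exact ht
  | succ k ih => exact ((ih.inv_right.mul_right ha.inv_right).mul_right ih).mul_right ha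

theorem fcomm_pow_of_commute {x a : E} (h : Commute (fcomm x a) a) (n : ℕ) :
    fcomm x (a ^ n) = fcomm x a ^ n := by
  induction n with
  | zero => simp [fcomm]
  | succ n ih =>
    have h₂ := (h.pow_left n).eq
    calc fcomm x (a ^ (n + 1)) = fcomm x a * (a⁻¹ * (fcomm x (a ^ n) * a)) := by
          simp only [fcomm, pow_succ]; group
      _ = _ := by rw [ih, h₂, inv_mul_cancel_left, pow_succ']

/-- In `⟨p, q⟩` abelian, the commutator of `p^i q^j` with an automorphism
`p ↦ q ↦ q⁻¹p⁻¹`. -/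
theorem Commute.inv_mul_rotate_zpow {p q : E} (h : Commute p q) (i j : ℤ) :
    (p ^ i * q ^ j)⁻¹ * (q ^ i * (q⁻¹ * p⁻¹) ^ j) = p ^ (-i - j) * q ^ (i - 2 * j) := by
  have hc : ∀ m n : ℤ, q ^ m * p ^ n = p ^ n * q ^ m := fun m n => (h.zpow_zpow n m).eq.symm
  rw [(h.symm.inv_inv).mul_zpow, mul_inv_rev, ← zpow_neg, ← zpow_neg, inv_zpow', inv_zpow']
  calc q ^ (-j) * p ^ (-i) * (q ^ i * (q ^ (-j) * p ^ (-j)))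
      = q ^ (-j) * p ^ (-i) * (q ^ (i - j) * p ^ (-j)) := by
        rw [← mul_assoc (q ^ i), ← zpow_add, ← sub_eq_add_neg]
    _ = p ^ (-i) * q ^ (-j) * (p ^ (-j) * q ^ (i - j)) := by rw [hc, hc]
    _ = p ^ (-i) * (q ^ (-j) * p ^ (-j)) * q ^ (i - j) := by simp only [mul_assoc]
    _ = (p ^ (-i) * p ^ (-j)) * (q ^ (-j) * q ^ (i - j)) := by rw [hc]; simp only [mul_assoc]
    _ = _ := by rw [← zpow_add, ← zpow_add]; congr 2; ring

end Commutators

namespace CentralMod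

variable {E : Type*} [Group E] {A : Subgroup E}

theorem one : CentralMod A (1 : E) := fun g => by simp [fcomm, A.one_mem]

theorem of_mem_center {k : E} (hk : k ∈ Subgroup.center E) : CentralMod A k := fun g => by
  rw [fcomm_eq_one_iff.2 (Subgroup.mem_center_iff.1 hk g).symm]
  exact A.one_mem

variable {k l : E}

theorem conj (hA : A ≤ Subgroup.center E) (hk : CentralMod A k) (g : E) :
    CentralMod A (g * k * g⁻¹) := fun x => by
  have h₁ := Subgroup.mem_center_iff.1 (hA (hk (g⁻¹ * x * g))) g
  have h₂ : fcomm (g * k * g⁻¹) x = g * fcomm k (g⁻¹ * x * g) * g⁻¹ := by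
    simp only [fcomm]; group
  rw [h₂, h₁, mul_inv_cancel_right]
  exact hk _

/-- Moving an element that is central modulo `A` past `g`. -/
theorem exists_mul_eq (hA : A ≤ Subgroup.center E) (hk : CentralMod A k) (g : E) :
    ∃ α ∈ A, (∀ x, α * x = x * α) ∧ k * g = g * k * α :=
  ⟨fcomm k g, hk g, fun x => (Subgroup.mem_center_iff.1 (hA (hk g)) x).symm, by
    simp only [fcomm]; group⟩

theorem fcomm_mul (hA : A ≤ Subgroup.center E) (hk : CentralMod A k) (l g : E) :
    fcomm (k * l) g = fcomm k g * fcomm l g := by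
  have h := Subgroup.mem_center_iff.1 (hA (hk g)) l
  calc fcomm (k * l) g = l⁻¹ * (fcomm k g * (g⁻¹ * l * g)) := by simp only [fcomm]; group
    _ = l⁻¹ * (fcomm k g * l) * (l⁻¹ * g⁻¹ * l * g) := by group
    _ = _ := by rw [← h]; simp only [fcomm]; group

theorem mul (hA : A ≤ Subgroup.center E) (hk : CentralMod A k) (hl : CentralMod A l) :
    CentralMod A (k * l) := fun g => by
  rw [hk.fcomm_mul hA]
  exact A.mul_mem (hk g) (hl g)

theorem inv (hA : A ≤ Subgroup.center E) (hk : CentralMod A k) : CentralMod A k⁻¹ := fun g => by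
  have : fcomm k⁻¹ g = (fcomm k g)⁻¹ := eq_inv_of_mul_eq_one_right <| by
    rw [← hk.fcomm_mul hA, mul_inv_cancel]
    simp [fcomm]
  rw [this]
  exact A.inv_mem (hk g)

theorem pow (hA : A ≤ Subgroup.center E) (hk : CentralMod A k) (n : ℕ) :
    CentralMod A (k ^ n) := by
  induction n with
  | zero => simpa using one
  | succ n ih => rw [pow_succ]; exact ih.mul hA hk

theorem commute_cube (hA : A ≤ Subgroup.center E) (h3 : ∀ x ∈ A, x ^ 3 = 1)
    (hk : CentralMod A k) (g : E) : Commute k (g ^ 3) := by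
  obtain ⟨α, hα, hc, h⟩ := hk.exists_mul_eq hA g
  have h₁ : SemiconjBy k g (α * g) := by
    rw [SemiconjBy, h, hc, mul_assoc, mul_assoc, hc]
  have h₂ := h₁.pow_right 3
  rwa [(show Commute α g from hc g).mul_pow, h3 α hα, one_mul] at h₂

theorem cube_mem_center (hA : A ≤ Subgroup.center E) (h3 : ∀ x ∈ A, x ^ 3 = 1)
    (hk : CentralMod A k) : k ^ 3 ∈ Subgroup.center E := by
  rw [Subgroup.mem_center_iff]
  intro g
  obtain ⟨α, hα, hc, h⟩ := hk.exists_mul_eq hA g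
  have h₁ : SemiconjBy g (α * k) k := by
    rw [SemiconjBy, h, hc, mul_assoc]
  have h₂ := h₁.pow_right 3
  rwa [(show Commute α k from hc k).mul_pow, h3 α hα, one_mul] at h₂

theorem mul_cube (hA : A ≤ Subgroup.center E) (h3 : ∀ x ∈ A, x ^ 3 = 1)
    (hk : CentralMod A k) (g : E) : (g * k) ^ 3 = g ^ 3 * k ^ 3 := by
  obtain ⟨α, hα, hc, h⟩ := hk.exists_mul_eq hA g
  have h' : ∀ x, k * (g * x) = g * (k * (α * x)) := fun x => by
    rw [← mul_assoc, h]; simp only [mul_assoc]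
  have hk' : ∀ x, α * (k * x) = k * (α * x) := fun x => by rw [← mul_assoc, hc, mul_assoc]
  have hg' : ∀ x, α * (g * x) = g * (α * x) := fun x => by rw [← mul_assoc, hc, mul_assoc]
  have hα3 : α * (α * α) = 1 := by rw [← h3 α hα, pow_succ, pow_two, mul_assoc]
  simp only [pow_succ, pow_zero, one_mul, mul_assoc, h', hk', hg', hc k, hα3, mul_one]

end CentralMod

/-- Elements of a central extension by `A` (of exponent dividing `3`) of a group satisfying the
relations of the cover limit `C^(e)`, where `u`, `s = [u,t]`, `y`, `z` are determined by `a`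
and `t`. -/
structure CoverLift {E : Type*} [Group E] (A : Subgroup E) (e : ℕ) (a t u s y z : E) : Prop where
  le_center : A ≤ Subgroup.center E
  cube : ∀ x ∈ A, x ^ 3 = 1
  conj_t : a⁻¹ * t * a = u
  comm_ut : fcomm u t = s
  rel_y : a⁻¹ * u * a * t * u * y = s ^ e
  rel_z : a ^ 3 * s = z
  central_s : CentralMod A s
  central_y : CentralMod A y
  central_z : CentralMod A z

namespace CoverLift

variable {E : Type*} [Group E] {A : Subgroup E} {e : ℕ} {a t u s y z : E}

theorem s_cube_mem_center (h : CoverLift A e a t u s y z) : s ^ 3 ∈ Subgroup.center E :=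
  h.central_s.cube_mem_center h.le_center h.cube

theorem u_mul_t (h : CoverLift A e a t u s y z) : u * t = t * u * s := by
  rw [← h.comm_ut, fcomm]; group

theorem conj_t_cube (h : CoverLift A e a t u s y z) : u⁻¹ * t ^ 3 * u = t ^ 3 * (s ^ 3)⁻¹ := by
  have h₁ : u⁻¹ * t * u = t * s⁻¹ := by rw [← h.comm_ut, fcomm]; group
  have h₂ := (h.central_s.inv h.le_center).mul_cube h.le_center h.cube t
  have h₃ : u⁻¹ * t ^ 3 * u = (u⁻¹ * t * u) ^ 3 := by
    have := conj_pow (a := u⁻¹) (b := t) (i := 3)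
    rw [inv_inv] at this
    exact this.symm
  rw [h₃, h₁, h₂, inv_pow]

theorem conj_u_cube (h : CoverLift A e a t u s y z) : t⁻¹ * u ^ 3 * t = u ^ 3 * s ^ 3 := by
  have h₁ : t⁻¹ * u * t = u * s := by rw [← h.comm_ut, fcomm]; group
  have h₂ := h.central_s.mul_cube h.le_center h.cube u
  have h₃ : t⁻¹ * u ^ 3 * t = (t⁻¹ * u * t) ^ 3 := by
    have := conj_pow (a := t⁻¹) (b := u) (i := 3)
    rw [inv_inv] at this
    exact this.symm
  rw [h₃, h₁, h₂]

theorem conj_a_cube (h : CoverLift A e a t u s y z) : a⁻¹ * t ^ 3 * a = u ^ 3 := by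
  have := conj_pow (a := a⁻¹) (b := t) (i := 3)
  rw [inv_inv, h.conj_t] at this
  exact this.symm

/-- `[s,t] = [s,u]`-type relation: an element central modulo `A` has the same commutator with
`t` and with `u = a⁻¹ta`. -/
theorem fcomm_t_eq_fcomm_u (h : CoverLift A e a t u s y z) {k : E} (hk : CentralMod A k) :
    fcomm k t = fcomm k u := by
  obtain ⟨α, hα, hc, h₁⟩ := hk.exists_mul_eq h.le_center a
  have h₂ := Subgroup.mem_center_iff.1 (h.le_center (hk t)) a⁻¹
  have h₃ : a⁻¹ * k * a = k * α := by rw [mul_assoc, h₁]; group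
  have hc' : Commute α k⁻¹ := hc k⁻¹
  calc fcomm k t = a⁻¹ * fcomm k t * a := by rw [h₂]; group
    _ = (a⁻¹ * k * a)⁻¹ * (a⁻¹ * t * a)⁻¹ * (a⁻¹ * k * a) * (a⁻¹ * t * a) := by
      simp only [fcomm]; group
    _ = (k * α)⁻¹ * u⁻¹ * (k * α) * u := by rw [h₃, h.conj_t]
    _ = α⁻¹ * (k⁻¹ * u⁻¹ * k * (α * u)) := by group
    _ = α⁻¹ * (k⁻¹ * u⁻¹ * k * u * α) := by rw [hc u]; group
    _ = fcomm k u := by rw [← hc]; simp only [fcomm]; group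

theorem tu_cube (h : CoverLift A e a t u s y z) : (t * u) ^ 3 = t ^ 3 * u ^ 3 * s ^ 3 := by
  obtain ⟨σ, hσ⟩ : ∃ σ, σ = fcomm s t := ⟨_, rfl⟩
  have hσ3 : σ ^ 3 = 1 := hσ ▸ h.cube _ (h.central_s t)
  have hc : ∀ x, σ * x = x * σ := fun x => by
    rw [hσ]; exact (Subgroup.mem_center_iff.1 (h.le_center (h.central_s t)) x).symm
  have ut : ∀ x, u * (t * x) = t * (u * (s * x)) := fun x => by
    rw [← mul_assoc, h.u_mul_t]; simp only [mul_assoc]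
  have st : ∀ x, s * (t * x) = t * (s * (σ * x)) := fun x => by
    rw [hσ, fcomm]; group
  have su : ∀ x, s * (u * x) = u * (s * (σ * x)) := fun x => by
    rw [hσ, h.fcomm_t_eq_fcomm_u h.central_s, fcomm]; group
  have su' : s * u = u * (s * σ) := by simpa using su 1
  have σt : ∀ x, σ * (t * x) = t * (σ * x) := fun x => by rw [← mul_assoc, hc, mul_assoc]
  have σu : ∀ x, σ * (u * x) = u * (σ * x) := fun x => by rw [← mul_assoc, hc, mul_assoc]
  have σs : ∀ x, σ * (s * x) = s * (σ * x) := fun x => by rw [← mul_assoc, hc, mul_assoc]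
  have σσ : σ * (σ * σ) = 1 := by rw [← hσ3, pow_succ, pow_two, mul_assoc]
  simp only [pow_succ, pow_zero, one_mul, mul_assoc, ut, st, su, su', σt, σu, σs, hc u, hc s, σσ,
    mul_one]

theorem exists_conj_a_u_cube (h : CoverLift A e a t u s y z) :
    ∃ c ∈ Subgroup.center E, a⁻¹ * u ^ 3 * a = (u ^ 3)⁻¹ * (t ^ 3)⁻¹ * c := by
  have hk : CentralMod A (s ^ e * y⁻¹) :=
    (h.central_s.pow h.le_center e).mul h.le_center (h.central_y.inv h.le_center)
  have hkc := hk.cube_mem_center h.le_center h.cube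
  have h₁ : a⁻¹ * u * a = s ^ e * y⁻¹ * (t * u)⁻¹ := by rw [← h.rel_y]; group
  have h₂ : a⁻¹ * u ^ 3 * a = (a⁻¹ * u * a) ^ 3 := by
    have := conj_pow (a := a⁻¹) (b := u) (i := 3)
    rw [inv_inv] at this
    exact this.symm
  have h₃ := hk.inv h.le_center |>.mul_cube h.le_center h.cube (t * u)
  refine ⟨(s ^ 3)⁻¹ * (s ^ e * y⁻¹) ^ 3, mul_mem (inv_mem h.s_cube_mem_center) hkc, ?_⟩
  have h₄ : s ^ e * y⁻¹ * (t * u)⁻¹ = (t * u * (s ^ e * y⁻¹)⁻¹)⁻¹ := by group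
  have h₅ := Subgroup.mem_center_iff.1 hkc (t ^ 3 * u ^ 3 * s ^ 3)⁻¹
  have h₆ := Subgroup.mem_center_iff.1 (inv_mem h.s_cube_mem_center) ((u ^ 3)⁻¹ * (t ^ 3)⁻¹)
  rw [h₂, h₁, h₄, inv_pow, h₃, h.tu_cube, inv_pow, mul_inv_rev, inv_inv, ← h₅, ← mul_assoc, h₆]
  group

/-- The action of `[·,a]` on elements `t^{3i}u^{3j}κ` with `κ` central modulo `A`. -/
theorem exists_fcomm_a (h : CoverLift A e a t u s y z) {κ : E} (hκ : CentralMod A κ) (i j : ℤ) :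
    ∃ c ∈ Subgroup.center E, fcomm ((t ^ 3) ^ i * (u ^ 3) ^ j * κ) a =
      (t ^ 3) ^ (-i - j) * (u ^ 3) ^ (i - 2 * j) * c := by
  obtain ⟨c, hc, hU⟩ := h.exists_conj_a_u_cube
  have hT := h.conj_a_cube
  have hconj : ∀ g : E, ∀ i : ℤ, a⁻¹ * g ^ i * a = (a⁻¹ * g * a) ^ i := fun g i => by
    have := conj_zpow (a := a⁻¹) (b := g) (i := i)
    rw [inv_inv] at this
    exact this.symm
  have hκT : Commute κ (t ^ 3) := hκ.commute_cube h.le_center h.cube t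
  have hκU : Commute κ (u ^ 3) := hκ.commute_cube h.le_center h.cube u
  have hκV : Commute κ (a⁻¹ * u ^ 3 * a) := by
    have := conj_pow (a := a⁻¹) (b := u) (i := 3)
    rw [inv_inv] at this
    rw [← this]
    exact hκ.commute_cube h.le_center h.cube _
  set q := QuotientGroup.mk' (Subgroup.center E) with hq
  have hqc : ∀ x ∈ Subgroup.center E, q x = 1 := fun x hx => (QuotientGroup.eq_one_iff x).2 hx
  have hTU : Commute (q (t ^ 3)) (q (u ^ 3)) := by
    have h₁ : u ^ 3 * t = t * (u ^ 3 * s ^ 3) := by rw [← h.conj_u_cube]; group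
    have h₂ := congrArg q h₁
    rw [map_mul, map_mul, map_mul, hqc _ h.s_cube_mem_center, mul_one] at h₂
    rw [map_pow q t]
    exact Commute.pow_left h₂.symm 3
  obtain ⟨X, hX⟩ : ∃ X, X = (t ^ 3) ^ i * (u ^ 3) ^ j := ⟨_, rfl⟩
  obtain ⟨Y, hY⟩ : ∃ Y, Y = (u ^ 3) ^ i * (a⁻¹ * u ^ 3 * a) ^ j := ⟨_, rfl⟩
  have hXY : a⁻¹ * X * a = Y := by
    have := hconj (t ^ 3) i
    rw [hT] at this
    rw [hX, hY, ← this, ← hconj (u ^ 3)]; group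
  have hκXY : Commute κ (X⁻¹ * Y) := by
    rw [hX, hY]
    exact (((hκT.zpow_right i).mul_right (hκU.zpow_right j)).inv_right).mul_right
      ((hκU.zpow_right i).mul_right (hκV.zpow_right j))
  have hfc : fcomm (X * κ) a = X⁻¹ * Y * fcomm κ a := by
    calc fcomm (X * κ) a = κ⁻¹ * (X⁻¹ * (a⁻¹ * X * a) * κ) * fcomm κ a := by
          simp only [fcomm]; group
      _ = _ := by rw [hXY, ← hκXY.eq]; group
  have hqXY : q (fcomm (X * κ) a) = q ((t ^ 3) ^ (-i - j) * (u ^ 3) ^ (i - 2 * j)) := by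
    rw [hfc, map_mul, hqc _ (h.le_center (hκ a)), mul_one, hX, hY, hU]
    simp only [map_mul, map_inv, map_zpow, hqc c hc, mul_one]
    exact hTU.inv_mul_rotate_zpow i j
  rw [← hX]
  exact ⟨_, QuotientGroup.eq.1 hqXY.symm, by group⟩

theorem exists_fcomm_fcomm_a (h : CoverLift A e a t u s y z) {κ : E} (hκ : CentralMod A κ)
    (i j : ℤ) : ∃ c ∈ Subgroup.center E, fcomm (fcomm ((t ^ 3) ^ i * (u ^ 3) ^ j * κ) a) a =
      (t ^ 3) ^ (3 * j) * (u ^ 3) ^ (3 * (j - i)) * c := by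
  obtain ⟨c, hc, h₁⟩ := h.exists_fcomm_a hκ i j
  obtain ⟨d, hd, h₂⟩ := h.exists_fcomm_a (CentralMod.of_mem_center (A := A) hc)
    (-i - j) (i - 2 * j)
  refine ⟨d, hd, ?_⟩
  rw [h₁, h₂]
  congr 3 <;> ring

theorem exists_itComm_two (h : CoverLift A e a t u s y z) :
    ∃ κ, CentralMod A κ ∧ itComm a t 2 = (u ^ 3)⁻¹ * κ := by
  have hA := h.le_center
  have hk : CentralMod A (s ^ e * y⁻¹) :=
    (h.central_s.pow hA e).mul hA (h.central_y.inv hA)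
  have hs := h.central_s.conj hA (t * u)
  refine ⟨_, ((hs.conj hA u).mul hA hs).mul hA (hk.conj hA (t * u)), ?_⟩
  have h₁ : a⁻¹ * u * a = s ^ e * y⁻¹ * (t * u)⁻¹ := by rw [← h.rel_y]; group
  have h₂ : itComm a t 2 = u⁻¹ * t * u⁻¹ * (a⁻¹ * u * a) := by
    simp only [itComm, ← h.conj_t, fcomm]; group
  rw [h₂, h₁]
  nth_rewrite 2 3 [← h.comm_ut]
  simp only [fcomm]
  group

/-- The commutators `w_{2n+3}` and `w_{2n+5}` in terms of `t³` and `u³`. -/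
theorem exists_itComm (h : CoverLift A e a t u s y z) (n : ℕ) :
    ∃ p q : ℤ, p ^ 2 - p * q + q ^ 2 = 1 ∧
      (∃ κ, CentralMod A κ ∧
        itComm a t (2 * n + 2) = (t ^ 3) ^ (3 ^ n * p) * (u ^ 3) ^ (3 ^ n * q) * κ) ∧
      ∃ c ∈ Subgroup.center E, itComm a t (2 * n + 4) =
        (t ^ 3) ^ (3 ^ (n + 1) * q) * (u ^ 3) ^ (3 ^ (n + 1) * (q - p)) * c := by
  induction n with
  | zero =>
    obtain ⟨κ, hκ, h₁⟩ := h.exists_itComm_two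
    have h₂ : itComm a t (2 * 0 + 2) =
        (t ^ 3) ^ (3 ^ 0 * 0 : ℤ) * (u ^ 3) ^ (3 ^ 0 * (-1) : ℤ) * κ := by
      simpa using h₁
    obtain ⟨c, hc, h₃⟩ := h.exists_fcomm_fcomm_a hκ (3 ^ 0 * 0) (3 ^ 0 * (-1))
    refine ⟨0, -1, by norm_num, ⟨κ, hκ, h₂⟩, c, hc, ?_⟩
    rw [← h₂] at h₃
    refine h₃.trans ?_
    congr 3
  | succ n ih =>
    obtain ⟨p, q, hpq, -, c, hc, h₁⟩ := ih
    have hc' := CentralMod.of_mem_center (A := A) hc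
    obtain ⟨d, hd, h₂⟩ := h.exists_fcomm_fcomm_a hc' (3 ^ (n + 1) * q) (3 ^ (n + 1) * (q - p))
    refine ⟨q, q - p, by linear_combination hpq, ⟨c, hc', h₁⟩, d, hd, ?_⟩
    rw [← h₁] at h₂
    refine h₂.trans ?_
    congr 3 <;> ring

theorem fcomm_zpow_t (h : CoverLift A e a t u s y z) {c : E} (hc : c ∈ Subgroup.center E)
    (i j : ℤ) : fcomm ((t ^ 3) ^ i * (u ^ 3) ^ j * c) t = (s ^ 3) ^ j := by
  have hct := Subgroup.mem_center_iff.1 hc t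
  have hS : Commute (u ^ 3) (s ^ 3) := Subgroup.mem_center_iff.1 h.s_cube_mem_center _
  have h₁ : t⁻¹ * (u ^ 3) ^ j * t = (u ^ 3) ^ j * (s ^ 3) ^ j := by
    have := conj_zpow (a := t⁻¹) (b := u ^ 3) (i := j)
    rw [inv_inv, h.conj_u_cube] at this
    rw [← this, hS.mul_zpow]
  calc fcomm ((t ^ 3) ^ i * (u ^ 3) ^ j * c) t
      = c⁻¹ * ((u ^ 3) ^ j)⁻¹ * (t⁻¹ * (u ^ 3) ^ j * t) * (t⁻¹ * (c * t)) := by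
        simp only [fcomm]; group
    _ = c⁻¹ * ((s ^ 3) ^ j * c) := by rw [h₁, ← hct]; group
    _ = (s ^ 3) ^ j := by rw [Subgroup.mem_center_iff.1 hc]; group

theorem fcomm_zpow_u (h : CoverLift A e a t u s y z) {c : E} (hc : c ∈ Subgroup.center E)
    (i j : ℤ) : fcomm ((t ^ 3) ^ i * (u ^ 3) ^ j * c) u = (s ^ 3) ^ (-i) := by
  have hcu := Subgroup.mem_center_iff.1 hc u
  have hS : Commute (t ^ 3) (s ^ 3)⁻¹ :=
    Commute.inv_right (Subgroup.mem_center_iff.1 h.s_cube_mem_center _)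
  have h₁ : u⁻¹ * (t ^ 3) ^ i * u = (t ^ 3) ^ i * (s ^ 3) ^ (-i) := by
    have := conj_zpow (a := u⁻¹) (b := t ^ 3) (i := i)
    rw [inv_inv, h.conj_t_cube] at this
    rw [← this, hS.mul_zpow, inv_zpow']
  have h₂ := Subgroup.mem_center_iff.1 (zpow_mem h.s_cube_mem_center (-i)) ((u ^ 3) ^ j * c)
  calc fcomm ((t ^ 3) ^ i * (u ^ 3) ^ j * c) u
      = c⁻¹ * ((u ^ 3) ^ j)⁻¹ * ((t ^ 3) ^ i)⁻¹ * (u⁻¹ * (t ^ 3) ^ i * u) * (u ^ 3) ^ j *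
          (u⁻¹ * (c * u)) := by
        simp only [fcomm]; group
    _ = c⁻¹ * ((u ^ 3) ^ j)⁻¹ * ((s ^ 3) ^ (-i) * ((u ^ 3) ^ j * c)) := by rw [h₁, ← hcu]; group
    _ = (s ^ 3) ^ (-i) := by rw [← h₂]; group

/-- `w_{2n+5}` central modulo `A` forces `s` to have order dividing `3^{n+2}`, and then `w_{2n+5}`
commutes with `t`. -/
theorem s_pow_eq_one (h : CoverLift A e a t u s y z) (n : ℕ)
    (hw : CentralMod A (itComm a t (2 * n + 4))) :
    (s ^ 3) ^ (3 ^ (n + 1) : ℤ) = 1 ∧ Commute (itComm a t (2 * n + 4)) t := by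
  obtain ⟨p, q, hpq, -, c, hc, h₁⟩ := h.exists_itComm n
  have h₂ : fcomm (itComm a t (2 * n + 4)) t = (s ^ 3) ^ (3 ^ (n + 1) * (q - p)) := by
    rw [h₁, h.fcomm_zpow_t hc]
  have h₃ : fcomm (itComm a t (2 * n + 4)) u = (s ^ 3) ^ (-(3 ^ (n + 1) * q)) := by
    rw [h₁, h.fcomm_zpow_u hc]
  have h₄ := h.cube _ (hw t)
  have h₅ := h.cube _ (hw u)
  have h₆ := h.fcomm_t_eq_fcomm_u hw
  rw [h₂] at h₄
  rw [h₃] at h₅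
  rw [h₂, h₃] at h₆
  rw [zpow_mul] at h₂ h₄ h₆
  rw [← mul_neg, zpow_mul] at h₅ h₆
  rw [← fcomm_eq_one_iff, h₂]
  generalize (s ^ 3) ^ (3 ^ (n + 1) : ℤ) = x at *
  have h₇ : x ^ (2 * q - p) = 1 := by
    rw [show 2 * q - p = (q - p) - (-q) by ring, zpow_sub, h₆, mul_inv_cancel]
  have h₈ : x ^ (3 * q) = 1 := by
    rw [← zpow_natCast, ← zpow_mul] at h₅
    rw [show 3 * q = -(-q * (3 : ℕ)) by push_cast; ring, zpow_neg, h₅, inv_one]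
  have hx : x = 1 := by
    have h₉ : (2 * q - p) * (2 * q - p) + 3 * q * (p - q) = 1 := by linear_combination hpq
    rw [← zpow_one x, ← h₉, zpow_add, zpow_mul, zpow_mul, h₇, h₈, one_zpow, one_zpow, one_mul]
  rw [hx]
  simp

/-- The element `v_{2n+5}` is central, and of order dividing `3` once `s^{3^{n+2}} = 1`. -/
theorem fcomm_itComm (h : CoverLift A e a t u s y z) (n : ℕ)
    (hs : (s ^ 3) ^ (3 ^ (n + 1) : ℤ) = 1) :
    fcomm (itComm a t (2 * n + 2)) (fcomm t a) ∈ Subgroup.center E ∧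
      fcomm (itComm a t (2 * n + 2)) (fcomm t a) ^ 3 = 1 := by
  obtain ⟨p, q, -, ⟨κ, hκ, h₁⟩, -⟩ := h.exists_itComm n
  obtain ⟨Y, hY⟩ : ∃ Y, Y = (t ^ 3) ^ (3 ^ n * p) * (u ^ 3) ^ (3 ^ n * q) := ⟨_, rfl⟩
  have hYt : fcomm Y t = (s ^ 3) ^ (3 ^ n * q) := by
    have := h.fcomm_zpow_t (one_mem _) (3 ^ n * p) (3 ^ n * q)
    rwa [mul_one, ← hY] at this
  have hYu : fcomm Y u = (s ^ 3) ^ (-(3 ^ n * p)) := by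
    have := h.fcomm_zpow_u (one_mem _) (3 ^ n * p) (3 ^ n * q)
    rwa [mul_one, ← hY] at this
  have hYκ : Commute κ Y := by
    rw [hY]
    exact ((hκ.commute_cube h.le_center h.cube t).zpow_right _).mul_right
      ((hκ.commute_cube h.le_center h.cube u).zpow_right _)
  have hta : fcomm t a = t⁻¹ * u := by rw [← h.conj_t, fcomm]; group
  have hS : ∀ i : ℤ, (s ^ 3) ^ i ∈ Subgroup.center E := zpow_mem h.s_cube_mem_center
  have hYg : fcomm Y (fcomm t a) = (s ^ 3) ^ (-(3 ^ n * (p + q))) := by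
    have hP : t * Y = Y * t * (fcomm Y t)⁻¹ := by simp only [fcomm]; group
    have hc := Subgroup.mem_center_iff.1 (inv_mem (hS (3 ^ n * q))) (t⁻¹ * u)
    rw [← hYt] at hc
    calc fcomm Y (fcomm t a) = Y⁻¹ * u⁻¹ * (t * Y) * (t⁻¹ * u) := by
          rw [hta, fcomm]; group
      _ = Y⁻¹ * u⁻¹ * Y * t * ((fcomm Y t)⁻¹ * (t⁻¹ * u)) := by rw [hP]; group
      _ = fcomm Y u * (fcomm Y t)⁻¹ := by rw [← hc]; simp only [fcomm]; group
      _ = _ := by rw [hYt, hYu, ← zpow_neg, ← zpow_add]; congr 1; ring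
  rw [h₁, ← hY, ← hYκ.eq, hκ.fcomm_mul h.le_center, hYg]
  refine ⟨mul_mem (h.le_center (hκ _)) (hS _), ?_⟩
  have hc : Commute (fcomm κ (fcomm t a)) ((s ^ 3) ^ (-(3 ^ n * (p + q)))) :=
    Subgroup.mem_center_iff.1 (hS _) _
  rw [hc.mul_pow, h.cube _ (hκ _), one_mul, ← zpow_natCast, ← zpow_mul,
    show -(3 ^ n * (p + q)) * ((3 : ℕ) : ℤ) = 3 ^ (n + 1) * -(p + q) by push_cast; ring,
    zpow_mul, hs, one_zpow]

theorem conj_a_cube_t (h : CoverLift A e a t u s y z) (hzt : Commute z t) :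
    (a ^ 3)⁻¹ * t * a ^ 3 = s * t * s⁻¹ := by
  have h₁ : a ^ 3 = z * s⁻¹ := by rw [← h.rel_z]; group
  rw [h₁, mul_inv_rev, inv_inv, mul_assoc, mul_assoc, ← mul_assoc t, ← hzt.eq]
  group

/-- The conjugate of `s` by `a`, once `y` commutes with `u`. -/
theorem conj_a_s (h : CoverLift A e a t u s y z) (hyu : Commute y u) :
    a⁻¹ * s * a = fcomm (s ^ e) u * (s * (fcomm s t)⁻¹) := by
  have hA := h.le_center
  have h₁ : a⁻¹ * u * a = s ^ e * (y⁻¹ * (t * u)⁻¹) := by rw [← h.rel_y]; group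
  have hc := Subgroup.mem_center_iff.1 (inv_mem (hA (h.central_s t))) t⁻¹
  have h₂ : t * s * t⁻¹ = s * (fcomm s t)⁻¹ := by
    calc t * s * t⁻¹ = s * t * ((fcomm s t)⁻¹ * t⁻¹) := by simp only [fcomm]; group
      _ = _ := by rw [← hc]; group
  calc a⁻¹ * s * a = fcomm (a⁻¹ * u * a) (a⁻¹ * t * a) := by
        rw [← h.comm_ut]; simp only [fcomm]; group
    _ = fcomm (s ^ e) u * fcomm (t * u)⁻¹ u := by
        rw [h₁, h.conj_t, (h.central_s.pow hA e).fcomm_mul hA,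
          (h.central_y.inv hA).fcomm_mul hA, fcomm_eq_one_iff.2 hyu.inv_left, one_mul]
    _ = fcomm (s ^ e) u * (t * s * t⁻¹) := by
        congr 1
        rw [← h.comm_ut]; simp only [fcomm]; group
    _ = _ := by rw [h₂]

theorem conj_a_cube_t_eq (h : CoverLift A e a t u s y z) :
    (a ^ 3)⁻¹ * t * a ^ 3 =
      (a⁻¹ * s * a) ^ e * (a⁻¹ * y * a)⁻¹ * (t * u * y * (s ^ e)⁻¹) * u⁻¹ := by
  have h₁ := conj_pow (a := a⁻¹) (b := s) (i := e)
  rw [inv_inv] at h₁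
  rw [h₁, ← h.rel_y, ← h.conj_t, pow_succ, pow_two]
  group

/-- If the two relators `y w_c^ℓ v_c` and `z w_c`, `c = 2n+5`, vanish in the central extension,
then so do all other relators of the cover limit. -/
theorem relations (h : CoverLift A e a t u s y z) (n : ℕ) {ℓ : ℤ}
    (heℓ : (e, ℓ) ∈ ({(0, 0), (0, -1), (1, 0), (1, -1), (1, 1)} : Set (ℕ × ℤ)))
    (hy : y * itComm a t (2 * n + 4) ^ ℓ *
      fcomm (itComm a t (2 * n + 2)) (fcomm t a) = 1)
    (hz : z * itComm a t (2 * n + 4) = 1) :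
    Commute s t ∧ Commute s a ∧ Commute y t ∧ Commute y a ∧ Commute z t ∧ Commute z a ∧
      y ^ 3 = 1 ∧ z ^ 3 = 1 := by
  have hw : itComm a t (2 * n + 4) = z⁻¹ := (inv_eq_of_mul_eq_one_right hz).symm
  obtain ⟨hs, hwt⟩ := h.s_pow_eq_one n (by rw [hw]; exact h.central_z.inv h.le_center)
  obtain ⟨hvc, hv3⟩ := h.fcomm_itComm n hs
  generalize fcomm (itComm a t (2 * n + 2)) (fcomm t a) = v at *
  have hzt : Commute z t := by rw [hw] at hwt; simpa using hwt.inv_left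
  have hyz : y = v⁻¹ * z ^ ℓ := by
    rw [hw, mul_assoc] at hy
    rw [eq_inv_of_mul_eq_one_left hy]; group
  have hvc' : ∀ x, Commute v⁻¹ x := fun x => (Subgroup.mem_center_iff.1 (inv_mem hvc) x).symm
  have hycomm : ∀ x, Commute z x → Commute y x := fun x hx => by
    rw [hyz]; exact (hvc' x).mul_left (hx.zpow_left ℓ)
  have hyt := hycomm t hzt
  have hyu : Commute y u := by
    rw [← fcomm_eq_one_iff, ← h.fcomm_t_eq_fcomm_u h.central_y, fcomm_eq_one_iff]; exact hyt
  have hst : Commute s t ∧ Commute s a := by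
    have h₁ := h.conj_a_s hyu
    have h₂ := h.conj_a_cube_t_eq
    rw [h.conj_a_cube_t hzt] at h₂
    have hsu : fcomm s t = fcomm s u := h.fcomm_t_eq_fcomm_u h.central_s
    have hσ3 := h.cube _ (h.central_s t)
    have hσc : ∀ x, Commute (fcomm s t) x := fun x =>
      (Subgroup.mem_center_iff.1 (h.le_center (h.central_s t)) x).symm
    have he : e = 1 ∨ e = 0 ∧ (ℓ = 0 ∨ ℓ = -1) := by
      simp only [Set.mem_insert_iff, Set.mem_singleton_iff, Prod.mk.injEq] at heℓ
      tauto
    rcases he with rfl | ⟨rfl, hℓ⟩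
    · rw [pow_one, ← hsu, (hσc _).eq, inv_mul_cancel_right] at h₁
      have hsa : Commute s a := by
        rw [Commute, SemiconjBy, ← mul_right_inj a⁻¹, ← mul_assoc, h₁]; group
      have hya : Commute y a := hycomm a <| by
        rw [← h.rel_z]; exact ((Commute.refl a).pow_left 3).mul_left hsa
      refine ⟨?_, hsa⟩
      rw [← fcomm_eq_one_iff, hsu, fcomm_eq_one_iff]
      have h₃ : a⁻¹ * y * a = y := by rw [mul_assoc, hya.eq]; group
      rw [pow_one, pow_one, h₁, h₃] at h₂
      have h₄ : y⁻¹ * (t * u * y) = t * u := by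
        rw [← (hyt.mul_right hyu).eq]; group
      have h₅ : s * t * s⁻¹ = s * (y⁻¹ * (t * u * y)) * s⁻¹ * u⁻¹ := by rw [h₂]; group
      rw [h₄] at h₅
      have h₆ : s⁻¹ = u * s⁻¹ * u⁻¹ := by
        rw [← mul_right_inj (s * t), h₅]; group
      have h₇ : Commute s⁻¹ u := by
        rw [Commute, SemiconjBy]; nth_rewrite 1 [h₆]; group
      simpa using h₇.inv_left
    · have h₃ : a⁻¹ * s * a = s * (fcomm s t)⁻¹ := by
        rw [h₁, pow_zero]; simp [fcomm]
      have h₄ : a⁻¹ * z * a = z * (fcomm s t)⁻¹ := by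
        calc a⁻¹ * z * a = a ^ 3 * (a⁻¹ * s * a) := by rw [← h.rel_z]; group
          _ = _ := by rw [h₃, ← mul_assoc, h.rel_z]
      have h₅ : a⁻¹ * y * a = y * fcomm s t ^ (-ℓ) := by
        have h₆ := conj_zpow (a := a⁻¹) (b := z) (i := ℓ)
        rw [inv_inv, h₄, (hσc z).symm.inv_right.mul_zpow, inv_zpow'] at h₆
        calc a⁻¹ * y * a = (a⁻¹ * v⁻¹ * a) * (a⁻¹ * z ^ ℓ * a) := by rw [hyz]; group
          _ = _ := by rw [mul_assoc a⁻¹, (hvc' a).eq, ← h₆, hyz]; group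
      have h₆ : s * t * s⁻¹ = t * fcomm s t := by
        calc s * t * s⁻¹ = t * s * (fcomm s t * s⁻¹) := by simp only [fcomm]; group
          _ = _ := by rw [(hσc _).eq]; group
      have h₇ : y⁻¹ * (t * u * y) = t * u := by
        rw [← (hyt.mul_right hyu).eq]; group
      have h₈ : t * fcomm s t = t * fcomm s t ^ ℓ := by
        rw [h₆, h₅, pow_zero, pow_zero, inv_one, mul_one, one_mul, mul_inv_rev, mul_assoc,
          mul_assoc, ← mul_assoc y⁻¹, h₇, mul_inv_cancel_right, ← zpow_neg, neg_neg,
          ((hσc t).zpow_left ℓ).eq] at h₂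
        exact h₂
      have hσ : fcomm s t = 1 := by
        have h₉ := mul_left_cancel h₈
        rcases hℓ with rfl | rfl
        · simpa using h₉
        · rw [zpow_neg_one, eq_inv_iff_mul_eq_one, ← pow_two] at h₉
          rwa [pow_succ, h₉, one_mul] at hσ3
      refine ⟨fcomm_eq_one_iff.1 hσ, ?_⟩
      rw [hσ, inv_one, mul_one] at h₃
      rw [Commute, SemiconjBy, ← mul_right_inj a⁻¹, ← mul_assoc, h₃]; group
  obtain ⟨hst, hsa⟩ := hst
  have hza : Commute z a := by
    rw [← h.rel_z]; exact ((Commute.refl a).pow_left 3).mul_left hsa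
  have hz3 : z ^ 3 = 1 := by
    have hwa : Commute (itComm a t (2 * n + 4)) a := by rw [hw]; exact hza.inv_left
    have hx : Commute (a ^ 3) (itComm a t (2 * n + 3)) := by
      have h₁ : a ^ 3 = z * s⁻¹ := by rw [← h.rel_z]; group
      rw [h₁]
      exact commute_itComm (hza.mul_left hsa.inv_left) (hzt.mul_left hst.inv_left) _
    have h₂ := fcomm_pow_of_commute (show Commute (fcomm (itComm a t (2 * n + 3)) a) a from hwa) 3
    rw [fcomm_eq_one_iff.2 hx.symm] at h₂
    have h₃ : (z⁻¹) ^ 3 = 1 := by rw [← hw]; exact h₂.symm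
    simpa using h₃
  refine ⟨hst, hsa, hyt, hycomm a hza, hzt, hza, ?_, hz3⟩
  rw [hyz, (hvc' _).mul_pow, inv_pow, hv3, ← zpow_natCast, zpow_comm, zpow_natCast, hz3]
  simp

end CoverLift

namespace CoverLimitDef

/-- The relations of `Q_{2n+5}^{(e,ℓ)}`, with generators `a, t, u, y, z` in a group. -/
structure QRelations {H : Type*} [Group H] (n e : ℕ) (ℓ : ℤ) (a t u y z : H) : Prop where
  conj_t : a⁻¹ * t * a = u
  rel_y : a⁻¹ * u * a * t * u * y = fcomm u t ^ e
  rel_z : a ^ 3 * fcomm (fcomm t a) t = z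
  comm_t : Commute (fcomm u t) t
  comm_u : Commute (fcomm u t) u
  y_cube : y ^ 3 = 1
  a_y : Commute a y
  t_y : Commute t y
  u_y : Commute u y
  z_y : Commute z y
  z_cube : z ^ 3 = 1
  t_z : Commute t z
  u_z : Commute u z
  y_eq : y * itComm a t (2 * n + 4) ^ ℓ * fcomm (itComm a t (2 * n + 2)) (fcomm t a) = 1
  z_eq : z * itComm a t (2 * n + 4) = 1

variable {n e : ℕ} {ℓ : ℤ}

theorem wC_eq_itComm (e k : ℕ) : wC e k = itComm (aC e) (tC e) k := by
  induction k with
  | zero => rfl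
  | succ k ih => simp only [wC, itComm, ih]

/-- The quotient map from the cover limit to `Q_c^{(e,ℓ)}`. -/
def toQ (c e : ℕ) (ℓ : ℤ) : CoverLimit e →* Qgrp c e ℓ := QuotientGroup.mk' _

theorem qRelations (n e : ℕ) (ℓ : ℤ) :
    QRelations n e ℓ (toQ (2 * n + 5) e ℓ (aC e)) (toQ (2 * n + 5) e ℓ (tC e))
      (toQ (2 * n + 5) e ℓ (uC e)) (toQ (2 * n + 5) e ℓ (yC e)) (toQ (2 * n + 5) e ℓ (zC e)) := by
  obtain ⟨φ, hφ⟩ : ∃ φ : FreeGroup (Fin 5) →* Qgrp (2 * n + 5) e ℓ,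
      φ = (toQ (2 * n + 5) e ℓ).comp (PresentedGroup.mk (Crels e)) := ⟨_, rfl⟩
  have h : ∀ r ∈ Crels e, φ r = 1 := fun r hr => by
    rw [hφ, MonoidHom.comp_apply, PresentedGroup.one_of_mem hr, map_one]
  have ha : φ awF = toQ (2 * n + 5) e ℓ (aC e) := by rw [hφ]; rfl
  have ht : φ twF = toQ (2 * n + 5) e ℓ (tC e) := by rw [hφ]; rfl
  have hu : φ uwF = toQ (2 * n + 5) e ℓ (uC e) := by rw [hφ]; rfl
  have hy : φ ywF = toQ (2 * n + 5) e ℓ (yC e) := by rw [hφ]; rfl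
  have hz : φ zwF = toQ (2 * n + 5) e ℓ (zC e) := by rw [hφ]; rfl
  have hN : ∀ x ∈ ({yC e * wC e (2 * n + 5 - 1) ^ ℓ * vC e (2 * n + 5),
      zC e * wC e (2 * n + 5 - 1)} : Set (CoverLimit e)), toQ (2 * n + 5) e ℓ x = 1 := fun x hx =>
    (QuotientGroup.eq_one_iff x).2 (Subgroup.subset_normalClosure hx)
  simp only [Crels, Set.mem_insert_iff, Set.mem_singleton_iff, forall_eq_or_imp, forall_eq,
    map_mul, map_inv, map_pow, map_fcomm, ha, ht, hu, hy, hz, mul_inv_eq_one,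
    fcomm_eq_one_iff] at h
  simp only [Set.mem_insert_iff, Set.mem_singleton_iff, forall_eq_or_imp, forall_eq, vC,
    wC_eq_itComm, map_mul, map_zpow, map_fcomm, map_itComm] at hN
  obtain ⟨h₁, h₂, h₃, h₄, h₅, h₆, h₇, h₈, h₉, h₁₀, h₁₁, h₁₂, h₁₃⟩ := h
  exact ⟨h₁, h₂, h₃, h₄, h₅, h₆, h₇, h₈, h₉, h₁₀, h₁₁, h₁₂, h₁₃, hN.1, hN.2⟩

/-- A subgroup of `Q_{2n+5}^{(e,ℓ)}` containing `a` and `t` is everything. -/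
theorem eq_top_of_mem {S : Subgroup (Qgrp (2 * n + 5) e ℓ)}
    (ha : toQ (2 * n + 5) e ℓ (aC e) ∈ S) (ht : toQ (2 * n + 5) e ℓ (tC e) ∈ S) : S = ⊤ := by
  have h := qRelations n e ℓ
  have hu : toQ (2 * n + 5) e ℓ (uC e) ∈ S := by
    rw [← h.conj_t]
    exact mul_mem (mul_mem (inv_mem ha) ht) ha
  have hfc : ∀ {x y}, x ∈ S → y ∈ S → fcomm x y ∈ S := fun hx hy =>
    mul_mem (mul_mem (mul_mem (inv_mem hx) (inv_mem hy)) hx) hy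
  have hy : toQ (2 * n + 5) e ℓ (yC e) ∈ S := by
    rw [eq_inv_mul_of_mul_eq h.rel_y]
    exact mul_mem (inv_mem (mul_mem (mul_mem (mul_mem (mul_mem (inv_mem ha) hu) ha) ht) hu))
      (pow_mem (hfc hu ht) e)
  have hz : toQ (2 * n + 5) e ℓ (zC e) ∈ S := by
    rw [← h.rel_z]
    exact mul_mem (pow_mem ha 3) (hfc (hfc ht ha) ht)
  have h₁ : S.comap (toQ (2 * n + 5) e ℓ) = ⊤ := by
    rw [eq_top_iff, ← PresentedGroup.closure_range_of, Subgroup.closure_le]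
    rintro _ ⟨i, rfl⟩
    fin_cases i
    exacts [ha, ht, hu, hy, hz]
  rw [eq_top_iff]
  intro x _
  obtain ⟨x, rfl⟩ := QuotientGroup.mk'_surjective _ x
  exact Subgroup.mem_comap.1 (h₁ ▸ Subgroup.mem_top x)

/-- The universal property of `Q_{2n+5}^{(e,ℓ)}`. -/
theorem exists_hom {H : Type*} [Group H] {a t u y z : H} (h : QRelations n e ℓ a t u y z) :
    ∃ φ : Qgrp (2 * n + 5) e ℓ →* H,
      φ (toQ (2 * n + 5) e ℓ (aC e)) = a ∧ φ (toQ (2 * n + 5) e ℓ (tC e)) = t := by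
  have hrel : ∀ r ∈ Crels e, FreeGroup.lift ![a, t, u, y, z] r = 1 := by
    simp only [Crels, Set.mem_insert_iff, Set.mem_singleton_iff, forall_eq_or_imp, forall_eq,
      map_mul, map_inv, map_pow, map_fcomm, awF, twF, uwF, ywF, zwF, FreeGroup.lift_apply_of,
      mul_inv_eq_one, fcomm_eq_one_iff]
    exact ⟨h.conj_t, h.rel_y, h.rel_z, h.comm_t, h.comm_u, h.y_cube, h.a_y, h.t_y, h.u_y, h.z_y,
      h.z_cube, h.t_z, h.u_z⟩
  have ha : PresentedGroup.toGroup hrel (aC e) = a := PresentedGroup.toGroup.of hrel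
  have ht : PresentedGroup.toGroup hrel (tC e) = t := PresentedGroup.toGroup.of hrel
  have hy : PresentedGroup.toGroup hrel (yC e) = y := PresentedGroup.toGroup.of hrel
  have hz : PresentedGroup.toGroup hrel (zC e) = z := PresentedGroup.toGroup.of hrel
  refine ⟨QuotientGroup.lift _ (PresentedGroup.toGroup hrel) ?_, ha, ht⟩
  apply Subgroup.normalClosure_le_normal
  simp only [Set.insert_subset_iff, Set.singleton_subset_iff, SetLike.mem_coe, MonoidHom.mem_ker,
    vC, wC_eq_itComm, map_mul, map_zpow, map_fcomm, map_itComm, ha, ht, hy, hz]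
  exact ⟨h.y_eq, h.z_eq⟩

/-- `[[t,a],t] = [u,t]` for `u = a⁻¹ta`. -/
theorem fcomm_fcomm_eq {H : Type*} [Group H] (a t : H) :
    fcomm (fcomm t a) t = fcomm (a⁻¹ * t * a) t := by
  simp only [fcomm]; group

namespace QRelations

variable {H : Type*} [Group H] {a t u y z : H}

theorem commute_s_a (h : QRelations n e ℓ a t u y z) : Commute (fcomm u t) a := by
  have h₁ : a⁻¹ * u * a = fcomm u t ^ e * y⁻¹ * (t * u)⁻¹ := by rw [← h.rel_y]; group
  have h₂ : Commute (fcomm u t ^ e * y⁻¹) u :=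
    (h.comm_u.pow_left e).mul_left h.u_y.symm.inv_left
  have h₃ : Commute (fcomm u t ^ e * y⁻¹) (t * u)⁻¹ :=
    (((h.comm_t.pow_left e).mul_left h.t_y.symm.inv_left).mul_right h₂).inv_right
  have h₄ : a⁻¹ * fcomm u t * a = fcomm u t := by
    calc a⁻¹ * fcomm u t * a = fcomm (a⁻¹ * u * a) (a⁻¹ * t * a) := by
          simp only [fcomm]; group
      _ = fcomm (t * u)⁻¹ u := by
          rw [h₁, h.conj_t]
          generalize fcomm u t ^ e * y⁻¹ = k at *
          calc fcomm (k * (t * u)⁻¹) u = t * u * k⁻¹ * u⁻¹ * (k * (t * u)⁻¹ * u) := by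
                simp only [fcomm]; group
            _ = t * u * (k⁻¹ * (u⁻¹ * k)) * ((t * u)⁻¹ * u) := by group
            _ = _ := by rw [← h₂.inv_right.eq]; simp only [fcomm]; group
      _ = t * fcomm u t * t⁻¹ := by simp only [fcomm]; group
      _ = _ := by rw [← h.comm_t.eq]; group
  rw [Commute, SemiconjBy, ← mul_right_inj a⁻¹, ← mul_assoc, h₄]; group

theorem rel_z' (h : QRelations n e ℓ a t u y z) : a ^ 3 * fcomm u t = z := by
  rw [← h.rel_z, fcomm_fcomm_eq, h.conj_t]

theorem commute_z_a (h : QRelations n e ℓ a t u y z) : Commute z a := by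
  rw [← h.rel_z']
  exact ((Commute.refl a).pow_left 3).mul_left h.commute_s_a

end QRelations

/-- An element of `Q_{2n+5}^{(e,ℓ)}` commuting with `a` and `t` is central. -/
theorem mem_center_of_commute {x : Qgrp (2 * n + 5) e ℓ}
    (ha : Commute x (toQ (2 * n + 5) e ℓ (aC e))) (ht : Commute x (toQ (2 * n + 5) e ℓ (tC e))) :
    x ∈ Subgroup.center (Qgrp (2 * n + 5) e ℓ) := by
  have h : Subgroup.centralizer {x} = ⊤ := eq_top_of_mem (n := n) (e := e) (ℓ := ℓ)
    (Subgroup.mem_centralizer_singleton_iff.2 ha.symm)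
    (Subgroup.mem_centralizer_singleton_iff.2 ht.symm)
  rw [Subgroup.mem_center_iff]
  intro g
  exact Subgroup.mem_centralizer_singleton_iff.1 (h ▸ Subgroup.mem_top g)

end CoverLimitDef

section Extension

open groupCohomology

variable {G : Type} [Group G]

/-- The trivial representation of `G` on `𝔽₃`. -/
abbrev trivRep (G : Type) [Group G] : Rep (ZMod 3) G := Rep.trivial (ZMod 3) G (ZMod 3)

theorem mem_cocycles₂_trivial_iff (f : G × G → ZMod 3) :
    f ∈ cocycles₂ (trivRep G) ↔ ∀ g h j, f (g * h, j) + f (g, h) = f (h, j) + f (g, h * j) :=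
  mem_cocycles₂_iff (A := trivRep G) f

/-- The value of a cocycle with trivial coefficients `𝔽₃`. -/
def cocycleVal (f : cocycles₂ (trivRep G)) (g h : G) : ZMod 3 := f.1 (g, h)

theorem cocycleVal_mul (f : cocycles₂ (trivRep G)) (g h j : G) :
    cocycleVal f (g * h) j + cocycleVal f g h = cocycleVal f h j + cocycleVal f g (h * j) :=
  (mem_cocycles₂_trivial_iff f.1).1 f.2 g h j

theorem cocycleVal_one_left (f : cocycles₂ (trivRep G)) (g : G) :
    cocycleVal f 1 g = cocycleVal f 1 1 := by
  have := cocycleVal_mul f 1 1 g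
  simp only [one_mul] at this
  exact (add_left_cancel this).symm

theorem cocycleVal_one_right (f : cocycles₂ (trivRep G)) (g : G) :
    cocycleVal f g 1 = cocycleVal f 1 1 := by
  have := cocycleVal_mul f g 1 1
  simp only [mul_one] at this
  exact add_right_cancel this

/-- The central extension of `G` by `𝔽₃` attached to a 2-cocycle. -/
@[ext]
structure CocycleExt (f : cocycles₂ (trivRep G)) where
  base : G
  fib : ZMod 3

namespace CocycleExt

variable {f : cocycles₂ (trivRep G)}

instance : Mul (CocycleExt f) :=
  ⟨fun x y => ⟨x.base * y.base, x.fib + y.fib + cocycleVal f x.base y.base⟩⟩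

instance : One (CocycleExt f) := ⟨⟨1, -cocycleVal f 1 1⟩⟩

instance : Inv (CocycleExt f) :=
  ⟨fun x => ⟨x.base⁻¹, -x.fib - cocycleVal f x.base⁻¹ x.base - cocycleVal f 1 1⟩⟩

@[simp] theorem base_mul (x y : CocycleExt f) : (x * y).base = x.base * y.base := rfl

@[simp] theorem fib_mul (x y : CocycleExt f) :
    (x * y).fib = x.fib + y.fib + cocycleVal f x.base y.base := rfl

@[simp] theorem base_one : (1 : CocycleExt f).base = 1 := rfl

@[simp] theorem fib_one : (1 : CocycleExt f).fib = -cocycleVal f 1 1 := rfl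

@[simp] theorem base_inv (x : CocycleExt f) : x⁻¹.base = x.base⁻¹ := rfl

@[simp] theorem fib_inv (x : CocycleExt f) :
    x⁻¹.fib = -x.fib - cocycleVal f x.base⁻¹ x.base - cocycleVal f 1 1 := rfl

instance : Group (CocycleExt f) :=
  Group.ofLeftAxioms
    (fun x y z => by
      ext
      · simp [mul_assoc]
      · have := cocycleVal_mul f x.base y.base z.base
        simp only [fib_mul, base_mul]
        linear_combination this)
    (fun x => by ext <;> simp [cocycleVal_one_left])
    (fun x => by
      ext
      · simp
      · simp only [fib_mul, fib_inv, base_inv, fib_one]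
        ring)

/-- The projection of the extension onto `G`. -/
def proj (f : cocycles₂ (trivRep G)) : CocycleExt f →* G where
  toFun := base
  map_one' := rfl
  map_mul' _ _ := rfl

@[simp] theorem proj_apply (x : CocycleExt f) : proj f x = x.base := rfl

theorem ker_proj_le_center : (proj f).ker ≤ Subgroup.center (CocycleExt f) := fun x hx => by
  have hx : x.base = 1 := hx
  rw [Subgroup.mem_center_iff]
  intro g
  ext
  · simp [hx]
  · simp only [fib_mul, hx, cocycleVal_one_left, cocycleVal_one_right]
    ring

theorem pow_three_of_mem_ker {x : CocycleExt f} (hx : x ∈ (proj f).ker) : x ^ 3 = 1 := by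
  have hx : x.base = 1 := hx
  rw [pow_succ, pow_two]
  ext
  · simp [hx]
  · simp only [fib_mul, base_mul, hx, mul_one, fib_one]
    have : (3 : ZMod 3) = 0 := rfl
    linear_combination (x.fib + cocycleVal f 1 1) * this

theorem centralMod_of_base_mem_center {x : CocycleExt f} (hx : x.base ∈ Subgroup.center G) :
    CentralMod (proj f).ker x := fun g => by
  rw [MonoidHom.mem_ker, map_fcomm, fcomm_eq_one_iff]
  exact (Subgroup.mem_center_iff.1 hx g.base).symm

/-- A splitting of the extension makes the cocycle a coboundary. -/
theorem mem_coboundaries₂_of_splitting (φ : G →* CocycleExt f)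
    (hφ : ∀ g, (φ g).base = g) : f.1 ∈ coboundaries₂ (trivRep G) := by
  refine ⟨fun g => -(φ g).fib, funext fun ⟨g, h⟩ => ?_⟩
  have h₁ := congrArg fib (map_mul φ g h)
  rw [fib_mul, hφ, hφ] at h₁
  change -(φ h).fib - -(φ (g * h)).fib + -(φ g).fib = cocycleVal f g h
  linear_combination h₁

/-- The map from a free group to the extension lifting given elements of `G` with trivial second
coordinate. -/
def freeLift {ι : Type} (x : ι → G) (f : cocycles₂ (trivRep G)) :
    FreeGroup ι →* CocycleExt f :=
  FreeGroup.lift fun i => ⟨x i, 0⟩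

theorem base_freeLift {ι : Type} (x : ι → G) (f : cocycles₂ (trivRep G)) (w : FreeGroup ι) :
    (freeLift x f w).base = FreeGroup.lift x w := by
  have : (proj f).comp (freeLift x f) = FreeGroup.lift x := by
    ext i
    simp [freeLift]
  exact DFunLike.congr_fun this w

/-- The second coordinate of the image of a word is linear in the cocycle. -/
def wordFunctional {ι : Type} (x : ι → G) (w : FreeGroup ι) :
    cocycles₂ (trivRep G) →ₗ[ZMod 3] ZMod 3 where
  toFun f := (freeLift x f w).fib
  map_add' f g := by
    have hv : ∀ a b, cocycleVal (f + g) a b = cocycleVal f a b + cocycleVal g a b :=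
      fun _ _ => rfl
    induction w using FreeGroup.induction_on with
    | C1 => simp only [map_one, fib_one, hv]; ring
    | of i => simp [freeLift]
    | inv_of i ih => simp only [map_inv, fib_inv, base_freeLift, hv, ih]; ring
    | mul v w hv' hw => simp only [map_mul, fib_mul, base_freeLift, hv, hv', hw]; ring
  map_smul' c f := by
    have hv : ∀ a b, cocycleVal (c • f) a b = c * cocycleVal f a b := fun _ _ => rfl
    simp only [RingHom.id_apply, smul_eq_mul]
    induction w using FreeGroup.induction_on with
    | C1 => simp only [map_one, fib_one, hv]; ring
    | of i => simp [freeLift]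
    | inv_of i ih => simp only [map_inv, fib_inv, base_freeLift, hv, ih]; ring
    | mul v w hv' hw => simp only [map_mul, fib_mul, base_freeLift, hv, hv', hw]; ring

end CocycleExt

/-- If two linear functionals on `Z²(G, 𝔽₃)` have only coboundaries as common zeros, then
`H²(G, 𝔽₃)` is finite of dimension at most `2`. -/
theorem finrank_H2_le_two (L : cocycles₂ (trivRep G) →ₗ[ZMod 3] ZMod 3 × ZMod 3)
    (hL : ∀ f, L f = 0 → f.1 ∈ coboundaries₂ (trivRep G)) :
    Module.Finite (ZMod 3) (groupCohomology (trivRep G) 2) ∧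
      Module.finrank (ZMod 3) (groupCohomology (trivRep G) 2) ≤ 2 := by
  have hsurj : Function.Surjective (H2π (trivRep G)).hom :=
    (ModuleCat.epi_iff_surjective _).1 inferInstance
  have hker : LinearMap.ker L ≤ LinearMap.ker (H2π (trivRep G)).hom := fun f hf =>
    (H2π_eq_zero_iff f).2 (hL f hf)
  have hq : Function.Surjective ((LinearMap.ker L).liftQ _ hker) := by
    rw [← LinearMap.range_eq_top, Submodule.range_liftQ, LinearMap.range_eq_top]
    exact hsurj
  have := Module.Finite.equiv L.quotKerEquivRange.symm
  refine ⟨Module.Finite.of_surjective _ hq, ?_⟩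
  calc _ ≤ Module.finrank (ZMod 3) (_ ⧸ LinearMap.ker L) :=
        LinearMap.finrank_le_finrank_of_surjective hq
    _ = Module.finrank (ZMod 3) (LinearMap.range L) := L.quotKerEquivRange.finrank_eq
    _ ≤ Module.finrank (ZMod 3) (ZMod 3 × ZMod 3) := Submodule.finrank_le _
    _ = 2 := by simp

end Extension

namespace CoverLimitDef

open CocycleExt

variable {n e : ℕ} {ℓ : ℤ}

section Words

/-- The word `y` in the generators `a`, `t` of the cover limit. -/
def wordY (e : ℕ) {H : Type*} [Group H] (a t : H) : H :=
  (a⁻¹ * (a⁻¹ * t * a) * a * t * (a⁻¹ * t * a))⁻¹ * fcomm (a⁻¹ * t * a) t ^ e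

/-- The word `z` in the generators `a`, `t` of the cover limit. -/
def wordZ {H : Type*} [Group H] (a t : H) : H := a ^ 3 * fcomm (a⁻¹ * t * a) t

/-- The relator `y·w_c^ℓ·v_c` for `c = 2n+5` as a word in `a`, `t`. -/
def relatorY (n e : ℕ) (ℓ : ℤ) {H : Type*} [Group H] (a t : H) : H :=
  wordY e a t * itComm a t (2 * n + 4) ^ ℓ * fcomm (itComm a t (2 * n + 2)) (fcomm t a)

/-- The relator `z·w_c` for `c = 2n+5` as a word in `a`, `t`. -/
def relatorZ (n : ℕ) {H : Type*} [Group H] (a t : H) : H :=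
  wordZ a t * itComm a t (2 * n + 4)

variable {H K : Type*} [Group H] [Group K] (φ : H →* K) (a t : H)

theorem map_wordY : φ (wordY e a t) = wordY e (φ a) (φ t) := by
  simp [wordY, map_fcomm]

theorem map_wordZ : φ (wordZ a t) = wordZ (φ a) (φ t) := by
  simp [wordZ, map_fcomm]

theorem map_relatorY : φ (relatorY n e ℓ a t) = relatorY n e ℓ (φ a) (φ t) := by
  simp [relatorY, map_wordY, map_fcomm, map_itComm]

theorem map_relatorZ : φ (relatorZ n a t) = relatorZ n (φ a) (φ t) := by
  simp [relatorZ, map_wordZ, map_itComm]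

variable {a t} {u y z : H}

theorem QRelations.wordY_eq (h : QRelations n e ℓ a t u y z) : wordY e a t = y := by
  rw [wordY, h.conj_t, eq_inv_mul_of_mul_eq h.rel_y]

theorem QRelations.wordZ_eq (h : QRelations n e ℓ a t u y z) : wordZ a t = z := by
  rw [wordZ, h.conj_t, h.rel_z']

theorem QRelations.relatorY_eq_one (h : QRelations n e ℓ a t u y z) :
    relatorY n e ℓ a t = 1 := by
  rw [relatorY, h.wordY_eq, h.y_eq]

theorem QRelations.relatorZ_eq_one (h : QRelations n e ℓ a t u y z) :
    relatorZ n a t = 1 := by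
  rw [relatorZ, h.wordZ_eq, h.z_eq]

end Words

/-- A lift of the generators of `Q_{2n+5}^{(e,ℓ)}` to a central extension by an elementary abelian
3-group satisfies all relations as soon as it satisfies the last two. -/
theorem qRelations_of_lift
    (heℓ : (e, ℓ) ∈ ({(0, 0), (0, -1), (1, 0), (1, -1), (1, 1)} : Set (ℕ × ℤ)))
    {f : groupCohomology.cocycles₂ (trivRep (Qgrp (2 * n + 5) e ℓ))} {a t : CocycleExt f}
    (ha : a.base = toQ (2 * n + 5) e ℓ (aC e)) (ht : t.base = toQ (2 * n + 5) e ℓ (tC e))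
    (hy : relatorY n e ℓ a t = 1) (hz : relatorZ n a t = 1) :
    QRelations n e ℓ a t (a⁻¹ * t * a) (wordY e a t) (wordZ a t) := by
  have hQ := qRelations n e ℓ
  have hbs : (fcomm (a⁻¹ * t * a) t).base =
      fcomm (toQ (2 * n + 5) e ℓ (uC e)) (toQ (2 * n + 5) e ℓ (tC e)) := by
    rw [← hQ.conj_t, ← ha, ← ht]; rfl
  have hby : (wordY e a t).base = toQ (2 * n + 5) e ℓ (yC e) := by
    rw [← hQ.wordY_eq, ← ha, ← ht]
    exact map_wordY (proj f) a t
  have hbz : (wordZ a t).base = toQ (2 * n + 5) e ℓ (zC e) := by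
    rw [← hQ.wordZ_eq, ← ha, ← ht]
    exact map_wordZ (proj f) a t
  have h : CoverLift (proj f).ker e a t (a⁻¹ * t * a) (fcomm (a⁻¹ * t * a) t) (wordY e a t)
      (wordZ a t) :=
    { le_center := ker_proj_le_center
      cube := fun _ => pow_three_of_mem_ker
      conj_t := rfl
      comm_ut := rfl
      rel_y := by rw [wordY, mul_inv_cancel_left]
      rel_z := rfl
      central_s := centralMod_of_base_mem_center <| by
        rw [hbs]; exact mem_center_of_commute hQ.commute_s_a hQ.comm_t
      central_y := centralMod_of_base_mem_center <| by
        rw [hby]; exact mem_center_of_commute hQ.a_y.symm hQ.t_y.symm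
      central_z := centralMod_of_base_mem_center <| by
        rw [hbz]; exact mem_center_of_commute hQ.commute_z_a hQ.t_z.symm }
  obtain ⟨hst, hsa, hyt, hya, hzt, hza, hy3, hz3⟩ := h.relations n heℓ hy hz
  have hu : ∀ {g : CocycleExt f}, Commute g a → Commute g t → Commute g (a⁻¹ * t * a) :=
    fun h₁ h₂ => (h₁.inv_right.mul_right h₂).mul_right h₁
  have hyu := hu hya hyt
  have hys : Commute (wordY e a t) (fcomm (a⁻¹ * t * a) t) :=
    ((hyu.inv_right.mul_right hyt.inv_right).mul_right hyu).mul_right hyt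
  exact
    { conj_t := rfl
      rel_y := h.rel_y
      rel_z := by rw [fcomm_fcomm_eq]; rfl
      comm_t := hst
      comm_u := hu hsa hst
      y_cube := hy3
      a_y := hya.symm
      t_y := hyt.symm
      u_y := hyu.symm
      z_y := ((hya.pow_right 3).mul_right hys).symm
      z_cube := hz3
      t_z := hzt.symm
      u_z := (hu hza hzt).symm
      y_eq := hy
      z_eq := hz }

theorem finrank_H2_Qgrp_le_two
    (heℓ : (e, ℓ) ∈ ({(0, 0), (0, -1), (1, 0), (1, -1), (1, 1)} : Set (ℕ × ℤ))) :
    Module.Finite (ZMod 3) (groupCohomology (trivRep (Qgrp (2 * n + 5) e ℓ)) 2) ∧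
      Module.finrank (ZMod 3) (groupCohomology (trivRep (Qgrp (2 * n + 5) e ℓ)) 2) ≤ 2 := by
  let x : Fin 2 → Qgrp (2 * n + 5) e ℓ :=
    ![toQ (2 * n + 5) e ℓ (aC e), toQ (2 * n + 5) e ℓ (tC e)]
  let F (w : FreeGroup (Fin 2)) := wordFunctional x w - wordFunctional x 1
  have hF : ∀ w f, FreeGroup.lift x w = 1 → F w f = 0 → freeLift x f w = 1 := by
    intro w f hb hf
    have h₁ : (freeLift x f w).fib - (freeLift x f 1).fib = 0 := hf
    rw [map_one] at h₁
    ext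
    · rw [base_freeLift, hb]; rfl
    · exact sub_eq_zero.1 h₁
  have hQ := qRelations n e ℓ
  refine finrank_H2_le_two ((F (relatorY n e ℓ (FreeGroup.of 0) (FreeGroup.of 1))).prod
    (F (relatorZ n (FreeGroup.of 0) (FreeGroup.of 1)))) fun f hf => ?_
  obtain ⟨hfy, hfz⟩ := Prod.ext_iff.1 hf
  have hy := hF _ f (by rw [map_relatorY]; simpa [x] using hQ.relatorY_eq_one) hfy
  have hz := hF _ f (by rw [map_relatorZ]; simpa [x] using hQ.relatorZ_eq_one) hfz
  rw [map_relatorY] at hy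
  rw [map_relatorZ] at hz
  have ha : (freeLift x f (FreeGroup.of 0)).base = toQ (2 * n + 5) e ℓ (aC e) := by
    simp [base_freeLift, x]
  have ht : (freeLift x f (FreeGroup.of 1)).base = toQ (2 * n + 5) e ℓ (tC e) := by
    simp [base_freeLift, x]
  obtain ⟨φ, hφa, hφt⟩ := exists_hom (qRelations_of_lift heℓ ha ht hy hz)
  have htop : ((proj f).comp φ).eqLocus (MonoidHom.id _) = ⊤ := by
    apply eq_top_of_mem
    · change (φ _).base = _
      rw [hφa, ha]; rfl
    · change (φ _).base = _
      rw [hφt, ht]; rfl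
  exact mem_coboundaries₂_of_splitting φ fun g =>
    show g ∈ ((proj f).comp φ).eqLocus (MonoidHom.id _) from htop ▸ Subgroup.mem_top g

end CoverLimitDef

namespace CoverLimitDef

open groupCohomology

variable {n e : ℕ} {ℓ : ℤ}

theorem fcomm_eq_one_of_comm {A : Type*} [CommGroup A] (g h : A) : fcomm g h = 1 :=
  fcomm_eq_one_iff.2 (Commute.all g h)

theorem itComm_succ_eq_one_of_comm {A : Type*} [CommGroup A] (a t : A) (k : ℕ) :
    itComm a t (k + 1) = 1 :=
  fcomm_eq_one_of_comm _ _

/-- Any two elements of exponent dividing `3` in a commutative group are the images of `a`, `t`. -/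
theorem exists_hom_of_comm (n e : ℕ) (ℓ : ℤ) {A : Type*} [CommGroup A] {a t : A}
    (ha : a ^ 3 = 1) (ht : t ^ 3 = 1) :
    ∃ φ : Qgrp (2 * n + 5) e ℓ →* A,
      φ (toQ (2 * n + 5) e ℓ (aC e)) = a ∧ φ (toQ (2 * n + 5) e ℓ (tC e)) = t := by
  refine exists_hom (u := t) (y := 1) (z := 1) ?_
  constructor <;>
    simp [fcomm_eq_one_of_comm, itComm_succ_eq_one_of_comm, ha, Commute.all]
  rw [← ht, pow_succ, pow_two]

/-- In a commutative quotient of `Q_{2n+5}^{(e,ℓ)}`, the images of `a` and `t` have exponent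
dividing `3`. -/
theorem map_pow_three_eq_one {A : Type*} [CommGroup A] (ψ : Qgrp (2 * n + 5) e ℓ →* A) :
    ψ (toQ (2 * n + 5) e ℓ (aC e)) ^ 3 = 1 ∧ ψ (toQ (2 * n + 5) e ℓ (tC e)) ^ 3 = 1 := by
  have hQ := qRelations n e ℓ
  have hy := congrArg ψ hQ.relatorY_eq_one
  have hz := congrArg ψ hQ.relatorZ_eq_one
  rw [map_relatorY, map_one] at hy
  rw [map_relatorZ, map_one] at hz
  simp only [relatorY, relatorZ, wordY, wordZ,
    fcomm_eq_one_of_comm, itComm_succ_eq_one_of_comm, one_zpow, one_pow, mul_one] at hy hz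
  refine ⟨hz, inv_eq_one.1 (hy ▸ congrArg _ ?_)⟩
  generalize ψ _ = a at *
  generalize ψ _ = t
  rw [mul_comm a⁻¹ t, inv_mul_cancel_right, mul_comm a⁻¹ t, inv_mul_cancel_right, pow_succ, pow_two]

/-- The carry cocycle of the extension `0 → ℤ/3 → ℤ/9 → ℤ/3 → 0`. -/
def carry (x y : ZMod 3) : ZMod 3 := if 3 ≤ x.val + y.val then 1 else 0

theorem carry_add (x y w : ZMod 3) :
    carry (x + y) w + carry x y = carry y w + carry x (y + w) := by
  revert x y w; decide

/-- The embedding of `ℤ/3` in `ℤ/9`. -/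
def mulThree : ZMod 3 →+ ZMod 9 where
  toFun x := 3 * (x.val : ZMod 9)
  map_zero' := rfl
  map_add' := by decide

theorem lift_mul_add (m x y : ZMod 3) :
    (m.val * x.val : ZMod 9) + m.val * y.val =
      m.val * ((x + y).val : ZMod 9) + mulThree (m * carry x y) := by
  revert m x y; decide

/-- The pullback of the carry cocycle along a character. -/
def carryCocycle {G : Type} [Group G] (χ : G →* Multiplicative (ZMod 3)) :
    cocycles₂ (trivRep G) :=
  ⟨fun p => carry (χ p.1).toAdd (χ p.2).toAdd, (mem_cocycles₂_trivial_iff _).2 fun g h j => by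
    simp only [map_mul, toAdd_mul, carry_add]⟩

/-- If a linear combination of pulled back carry cocycles is a coboundary, the corresponding
combination of characters lifts to `ℤ/9`. -/
theorem exists_lift_of_mem_coboundaries₂ {G : Type} [Group G]
    (χ θ : G →* Multiplicative (ZMod 3)) (m k : ZMod 3)
    (h : (m • carryCocycle χ + k • carryCocycle θ).1 ∈ coboundaries₂ (trivRep G)) :
    ∃ (ψ : G →* Multiplicative (ZMod 9)) (b : G → ZMod 3), ∀ g, (ψ g).toAdd =
      m.val * (χ g).toAdd.val + k.val * (θ g).toAdd.val - mulThree (b g) := by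
  obtain ⟨b, hb⟩ := h
  have hb (g h : G) : b h - b (g * h) + b g =
      m * carry (χ g).toAdd (χ h).toAdd + k * carry (θ g).toAdd (θ h).toAdd :=
    congrFun hb (g, h)
  refine ⟨MonoidHom.mk' (fun g => Multiplicative.ofAdd
    (m.val * (χ g).toAdd.val + k.val * (θ g).toAdd.val - mulThree (b g) : ZMod 9))
    fun g h => ?_, b, fun g => rfl⟩
  rw [← ofAdd_add, map_mul χ, map_mul θ, toAdd_mul, toAdd_mul]
  congr 1
  have h₁ := lift_mul_add m (χ g).toAdd (χ h).toAdd
  have h₂ := lift_mul_add k (θ g).toAdd (θ h).toAdd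
  have h₃ := congrArg mulThree (hb g h)
  simp only [map_add, map_sub] at h₃
  linear_combination h₃ - h₁ - h₂

theorem two_le_finrank_H2_Qgrp
    [Module.Finite (ZMod 3) (groupCohomology (trivRep (Qgrp (2 * n + 5) e ℓ)) 2)] :
    2 ≤ Module.finrank (ZMod 3) (groupCohomology (trivRep (Qgrp (2 * n + 5) e ℓ)) 2) := by
  have hcube (x : Multiplicative (ZMod 3)) : x ^ 3 = 1 := by revert x; decide
  obtain ⟨χ, hχa, hχt⟩ := exists_hom_of_comm n e ℓ
    (hcube (Multiplicative.ofAdd 1)) (hcube (Multiplicative.ofAdd 0))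
  obtain ⟨θ, hθa, hθt⟩ := exists_hom_of_comm n e ℓ
    (hcube (Multiplicative.ofAdd 0)) (hcube (Multiplicative.ofAdd 1))
  have hind : LinearIndependent (ZMod 3)
      ![(H2π (trivRep (Qgrp (2 * n + 5) e ℓ))).hom (carryCocycle χ),
        (H2π (trivRep (Qgrp (2 * n + 5) e ℓ))).hom (carryCocycle θ)] := by
    rw [LinearIndependent.pair_iff]
    intro m k hmk
    rw [← map_smul, ← map_smul, ← map_add] at hmk
    obtain ⟨ψ, b, hψ⟩ := exists_lift_of_mem_coboundaries₂ χ θ m k ((H2π_eq_zero_iff _).1 hmk)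
    obtain ⟨ha, ht⟩ := map_pow_three_eq_one ψ
    have key (m b : ZMod 3) (h : 3 * ((m.val : ZMod 9) - mulThree b) = 0) : m = 0 := by
      revert m b; decide
    have hone : ((1 : ZMod 3).cast : ZMod 9) = 1 := rfl
    constructor
    · refine key m (b (toQ (2 * n + 5) e ℓ (aC e))) ?_
      have := congrArg Multiplicative.toAdd ha
      rw [toAdd_pow, hψ, hχa, hθa] at this
      simpa [hone] using this
    · refine key k (b (toQ (2 * n + 5) e ℓ (tC e))) ?_
      have := congrArg Multiplicative.toAdd ht
      rw [toAdd_pow, hψ, hχt, hθt] at this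
      simpa [hone] using this
  simpa using hind.fintype_card_le_finrank

theorem finrank_H1_Qgrp :
    Module.finrank (ZMod 3) (groupCohomology (trivRep (Qgrp (2 * n + 5) e ℓ)) 1) = 2 := by
  rw [(H1IsoOfIsTrivial (trivRep (Qgrp (2 * n + 5) e ℓ))).toLinearEquiv.finrank_eq]
  let ev : (Additive (Qgrp (2 * n + 5) e ℓ) →+ ZMod 3) →ₗ[ZMod 3] ZMod 3 × ZMod 3 :=
    { toFun := fun φ => (φ (Additive.ofMul (toQ (2 * n + 5) e ℓ (aC e))),
        φ (Additive.ofMul (toQ (2 * n + 5) e ℓ (tC e))))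
      map_add' := fun _ _ => rfl
      map_smul' := fun _ _ => rfl }
  have hev : Function.Bijective ev := by
    constructor
    · intro φ ψ h
      obtain ⟨ha, ht⟩ := Prod.ext_iff.1 h
      have htop : (AddMonoidHom.toMultiplicative φ).eqLocus (AddMonoidHom.toMultiplicative ψ) = ⊤ :=
        eq_top_of_mem ha ht
      exact AddMonoidHom.toMultiplicative.injective (MonoidHom.ext fun g =>
        show g ∈ MonoidHom.eqLocus _ _ from htop ▸ Subgroup.mem_top g)
    · rintro ⟨x, y⟩
      have hcube (x : Multiplicative (ZMod 3)) : x ^ 3 = 1 := by revert x; decide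
      obtain ⟨χ, hχa, hχt⟩ := exists_hom_of_comm n e ℓ
        (hcube (Multiplicative.ofAdd x)) (hcube (Multiplicative.ofAdd y))
      exact ⟨MonoidHom.toAdditiveLeft χ, Prod.ext hχa hχt⟩
  refine (LinearEquiv.ofBijective ev hev).finrank_eq.trans ?_
  simp

end CoverLimitDef

theorem Qgrp_balanced_presentation (n : ℕ) (e : ℕ) (ℓ : ℤ)
    (h : (e, ℓ) ∈ ({(0, 0), (0, -1), (1, 0), (1, -1), (1, 1)} : Set (ℕ × ℤ))) :
    Module.finrank (ZMod 3)
      (groupCohomology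
        (Rep.trivial (ZMod 3) (Qgrp (2 * n + 5) e ℓ) (ZMod 3)) 1) = 2 ∧
    Module.finrank (ZMod 3)
      (groupCohomology
        (Rep.trivial (ZMod 3) (Qgrp (2 * n + 5) e ℓ) (ZMod 3)) 2) = 2 := by
  obtain ⟨_, h₂⟩ := finrank_H2_Qgrp_le_two (n := n) h
  exact ⟨finrank_H1_Qgrp, le_antisymm h₂ two_le_finrank_H2_Qgrp⟩
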